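/- Let λ > 0 and β ∈ (0,1]. For every ε > 0 there exist q ∈ ℕ₀ and K' > 0 such that for every sequence (φ_n)_{n∈ℕ₀} ⊂ ℂ with ‖φ‖_q² := ∑_{n=0}^∞ (n!)² 2^{nq} |φ_n|² < ∞, the series φ(z) := ∑_{n=0}^∞ φ_n C_n^{λ,β}(z) converges for every z ∈ ℂ, defines an entire function of z, and satisfies |φ(z)| ≤ K' ‖φ‖_q e^{ε|z|} for all z ∈ ℂ. In particular, every such φ is an entire function of minimal type and order of growth one. -/

import Mathlib

/-!
The generating function of `C_n^{λ,β}` has the Sheffer form `e^{x h(z)} g(z)` with `g` and `h`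
analytic at `0` and `h(0) = 0`. On a small disc of radius `δ`, independent of `x`, one has
`|h| ≤ ε` and `|g| ≤ C`, so the Cauchy estimate gives `|C_n(x)| ≤ n! δ^{-n} C e^{ε|x|}` for all `n`
at once. Choosing `q` with `2^q δ² > 1`, Cauchy–Schwarz bounds `∑ |φ_n| n! δ^{-n}` by a constant
times `‖φ‖_q`, and the Weierstrass M-test does the rest.
-/

open MeasureTheory Finset
open scoped ENNReal NNReal

noncomputable section

/-- The complex Mittag-Leffler function `E_β(z) = ∑ zⁿ / Γ(βn+1)`. -/
def mittagLeffler (β : ℝ) (z : ℂ) : ℂ :=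
  ∑' n : ℕ, z ^ n / (Complex.Gamma ((β * n + 1 : ℝ) : ℂ))

/-- The real Mittag-Leffler function `E_β(x) = ∑ xⁿ / Γ(βn+1)`. -/
def mittagLefflerR (β : ℝ) (x : ℝ) : ℝ :=
  ∑' n : ℕ, x ^ n / Real.Gamma (β * n + 1)

/-- The fractional Poisson measure `π_{λ,β} = ∑_k (λᵏ/k!) E_β⁽ᵏ⁾(-λ) δ_k` on `ℝ`. -/
def fracPoisson (lam β : ℝ) : Measure ℝ :=
  Measure.sum fun k : ℕ =>
    ENNReal.ofReal (lam ^ k / k.factorial * iteratedDeriv k (mittagLefflerR β) (-lam)) •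
      Measure.dirac (k : ℝ)

/-- The Poisson measure with rate `μ` on `ℝ`, `π_μ({k}) = (μᵏ/k!) e^{-μ}`. -/
def poissonMeasureR (μ : ℝ) : Measure ℝ :=
  Measure.sum fun k : ℕ =>
    ENNReal.ofReal (μ ^ k / k.factorial * Real.exp (-μ)) • Measure.dirac (k : ℝ)

/-- The generalized Appell polynomials
`C_n^{λ,β}(x) = dⁿ/dzⁿ [e^{x log(1+z)} / E_β(λz)]` at `z = 0`. -/
def genAppell (lam β : ℝ) (n : ℕ) (x : ℂ) : ℂ :=
  iteratedDeriv n
    (fun z : ℂ => Complex.exp (x * Complex.log (1 + z)) / mittagLeffler β (lam * z)) 0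

/-- The Appell polynomials `A_n^{λ,β}(x) = dⁿ/dzⁿ [e^{zx} / E_β(λ(eᶻ-1))]` at `z = 0`. -/
def appell (lam β : ℝ) (n : ℕ) (x : ℂ) : ℂ :=
  iteratedDeriv n
    (fun z : ℂ => Complex.exp (z * x) / mittagLeffler β (lam * (Complex.exp z - 1))) 0

/-- Stirling numbers of the first kind, via `(log(1+z))^k = k! ∑_{n≥k} s(n,k) zⁿ/n!`. -/
def stirlingFst (n k : ℕ) : ℝ :=
  iteratedDeriv n (fun x : ℝ => (Real.log (1 + x)) ^ k) 0 / k.factorial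

/-- Stirling numbers of the second kind, via `(eᶻ-1)^k = k! ∑_{n≥k} S(n,k) zⁿ/n!`. -/
def stirlingSnd (n k : ℕ) : ℝ :=
  iteratedDeriv n (fun x : ℝ => (Real.exp x - 1) ^ k) 0 / k.factorial

/-- The `n`-th moment of the fractional Poisson measure. -/
def fpMoment (lam β : ℝ) (n : ℕ) : ℝ := ∫ x, x ^ n ∂(fracPoisson lam β)

/-- `M̃_{λ,β}(m) = m! λᵐ / Γ(mβ+1)`. -/
def tildeM (lam β : ℝ) (m : ℕ) : ℝ := m.factorial * lam ^ m / Real.Gamma (m * β + 1)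

/-- The (partial exponential) Bell polynomials `B_{n,k}(x₁, …, x_{n-k+1})`. -/
def bellPoly (n k : ℕ) (x : ℕ → ℂ) : ℂ :=
  ∑ j ∈ (Fintype.piFinset fun _ : Fin (n - k + 1) => Finset.range (n + 1)).filter
      (fun j => (∑ i, j i) = k ∧ (∑ i, (i.1 + 1) * j i) = n),
    (n.factorial : ℂ) / (∏ i, ((j i).factorial : ℂ)) *
      ∏ i, (x (i.1 + 1) / ((i.1 + 1).factorial : ℂ)) ^ j i

open scoped Topology

theorem summable_mul_and_tsum_mul_le_sqrt_mul_sqrt {ι : Type*} {f g : ι → ℝ}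
    (hf₀ : ∀ i, 0 ≤ f i) (hg₀ : ∀ i, 0 ≤ g i)
    (hf : Summable fun i => f i ^ 2) (hg : Summable fun i => g i ^ 2) :
    (Summable fun i => f i * g i) ∧
      ∑' i, f i * g i ≤ √(∑' i, f i ^ 2) * √(∑' i, g i ^ 2) := by
  simpa only [Real.rpow_two, ← Real.sqrt_eq_rpow] using
    Real.summable_and_inner_le_Lp_mul_Lq_tsum_of_nonneg .two_two hf₀ hg₀
      (by simpa only [Real.rpow_two] using hf) (by simpa only [Real.rpow_two] using hg)

theorem summable_div_pow_and_tsum_div_pow_le {a : ℕ → ℝ} {c δ : ℝ} (hc : 0 < c) (hδ : 0 < δ)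
    (hcδ : 1 < c * δ ^ 2) (ha₀ : ∀ n, 0 ≤ a n) (ha : Summable fun n => c ^ n * a n ^ 2) :
    (Summable fun n => a n / δ ^ n) ∧
      ∑' n, a n / δ ^ n ≤ √(∑' n, c ^ n * a n ^ 2) * √(1 - (c * δ ^ 2)⁻¹)⁻¹ := by
  have hweighted (n : ℕ) : (√c ^ n * a n) ^ 2 = c ^ n * a n ^ 2 := by
    rw [mul_pow, pow_right_comm, Real.sq_sqrt hc.le]
  have hdual (n : ℕ) : ((√c * δ)⁻¹ ^ n) ^ 2 = (c * δ ^ 2)⁻¹ ^ n := by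
    rw [pow_right_comm, inv_pow, mul_pow, Real.sq_sqrt hc.le]
  have hprod (n : ℕ) : √c ^ n * a n * (√c * δ)⁻¹ ^ n = a n / δ ^ n := by
    rw [inv_pow, mul_pow]
    field_simp
  have hratio₀ : 0 ≤ (c * δ ^ 2)⁻¹ := by positivity
  have hratio₁ : (c * δ ^ 2)⁻¹ < 1 := inv_lt_one_of_one_lt₀ hcδ
  simpa only [hprod, hweighted, hdual, tsum_geometric_of_lt_one hratio₀ hratio₁] using
    summable_mul_and_tsum_mul_le_sqrt_mul_sqrt
      (f := fun n => √c ^ n * a n) (g := fun n => (√c * δ)⁻¹ ^ n)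
      (fun n => mul_nonneg (by positivity) (ha₀ n)) (fun n => by positivity)
      (by simpa only [hweighted] using ha)
      (by simpa only [hdual] using summable_geometric_of_lt_one hratio₀ hratio₁)

theorem differentiable_tsum_of_norm_le_mul {ι F : Type*} [NormedAddCommGroup F]
    [NormedSpace ℂ F] [CompleteSpace F] {f : ι → ℂ → F} {u : ι → ℝ} {B : ℂ → ℝ}
    (hu : Summable u) (hB : Continuous B) (hf : ∀ i, Differentiable ℂ (f i))
    (hfB : ∀ i z, ‖f i z‖ ≤ u i * B z) :
    Differentiable ℂ fun z => ∑' i, f i z := by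
  intro z
  have hopen : IsOpen {w | |B w| < |B z| + 1} := isOpen_lt hB.abs continuous_const
  refine DifferentiableOn.differentiableAt ?_ (hopen.mem_nhds (lt_add_one |B z|))
  refine Complex.differentiableOn_tsum_of_summable_norm (hu.abs.mul_right (|B z| + 1))
    (fun i => (hf i).differentiableOn) hopen fun i w hw => ?_
  calc ‖f i w‖ ≤ |u i| * |B w| := (hfB i w).trans ((le_abs_self _).trans_eq (abs_mul _ _))
    _ ≤ |u i| * (|B z| + 1) := mul_le_mul_of_nonneg_left hw.le (abs_nonneg _)

theorem analyticAt_tsum_mul_pow {a : ℕ → ℂ} {C : ℝ} (ha : ∀ n, ‖a n‖ ≤ C) :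
    AnalyticAt ℂ (fun z => ∑' n, a n * z ^ n) 0 := by
  have hdiff : DifferentiableOn ℂ (fun z => ∑' n, a n * z ^ n) (Metric.ball 0 (1 / 2)) := by
    refine Complex.differentiableOn_tsum_of_summable_norm (summable_geometric_two.mul_left C)
      (fun n => by fun_prop) Metric.isOpen_ball fun n z hz => ?_
    have hz' : ‖z‖ ≤ 1 / 2 := (mem_ball_zero_iff.1 hz).le
    have hC : 0 ≤ C := (norm_nonneg _).trans (ha n)
    rw [norm_mul, norm_pow]
    gcongr
    exact ha n
  exact hdiff.analyticAt (Metric.ball_mem_nhds _ one_half_pos)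

section IteratedDeriv

variable {𝕜 E F : Type*} [NontriviallyNormedField 𝕜] [NormedAddCommGroup E] [NormedSpace 𝕜 E]
  [NormedAddCommGroup F] [NormedSpace 𝕜 F] [CompleteSpace F]

theorem analyticAt_deriv_snd {f : E → 𝕜 → F} {p : E × 𝕜}
    (hf : AnalyticAt 𝕜 (fun p : E × 𝕜 => f p.1 p.2) p) :
    AnalyticAt 𝕜 (fun p : E × 𝕜 => deriv (f p.1) p.2) p := by
  have hfderiv : AnalyticAt 𝕜
      (fun p : E × 𝕜 => fderiv 𝕜 (fun p : E × 𝕜 => f p.1 p.2) p (0, 1)) p :=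
    ((ContinuousLinearMap.apply 𝕜 F ((0 : E), (1 : 𝕜))).analyticAt _).comp hf.fderiv
  refine hfderiv.congr ?_
  filter_upwards [hf.eventually_analyticAt] with y hy
  have hline : HasDerivAt (fun z : 𝕜 => (y.1, z)) ((0 : E), (1 : 𝕜)) y.2 :=
    (hasDerivAt_const _ _).prodMk (hasDerivAt_id _)
  exact (hy.differentiableAt.hasFDerivAt.comp_hasDerivAt y.2 hline).deriv.symm

theorem analyticAt_iteratedDeriv_snd {f : E → 𝕜 → F} {p : E × 𝕜}
    (hf : AnalyticAt 𝕜 (fun p : E × 𝕜 => f p.1 p.2) p) (n : ℕ) :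
    AnalyticAt 𝕜 (fun p : E × 𝕜 => iteratedDeriv n (f p.1) p.2) p := by
  induction n with
  | zero => simpa only [iteratedDeriv_zero] using hf
  | succ n ih =>
    simpa only [iteratedDeriv_succ] using
      analyticAt_deriv_snd (f := fun x => iteratedDeriv n (f x)) ih

end IteratedDeriv

/-- The Sheffer sequence with exponential generating function `∑ sₙ(x) zⁿ / n! = g(z) e^{x h(z)}`,
the class to which the generalized Appell polynomials belong. Analyticity of `g` and `h` at `0` and
`h(0) = 0` are left to the lemmas that need them. -/
def shefferSeq (g h : ℂ → ℂ) (n : ℕ) (x : ℂ) : ℂ :=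
  iteratedDeriv n (fun z => Complex.exp (x * h z) * g z) 0

section Sheffer

variable {g h : ℂ → ℂ}

theorem differentiable_shefferSeq (hg : AnalyticAt ℂ g 0) (hh : AnalyticAt ℂ h 0) (n : ℕ) :
    Differentiable ℂ (shefferSeq g h n) := by
  intro x
  have hg' : AnalyticAt ℂ (fun p : ℂ × ℂ => g p.2) (x, 0) :=
    hg.comp_of_eq analyticAt_snd rfl
  have hh' : AnalyticAt ℂ (fun p : ℂ × ℂ => h p.2) (x, 0) :=
    hh.comp_of_eq analyticAt_snd rfl
  have hderiv := analyticAt_iteratedDeriv_snd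
    (f := fun x z => Complex.exp (x * h z) * g z) ((analyticAt_fst.mul hh').cexp.mul hg') n
  exact (hderiv.comp_of_eq (analyticAt_id.prod analyticAt_const) rfl).differentiableAt

theorem norm_shefferSeq_le {C δ ε : ℝ} (hδ : 0 < δ)
    (hg : DifferentiableOn ℂ g (Metric.closedBall 0 δ))
    (hh : DifferentiableOn ℂ h (Metric.closedBall 0 δ))
    (hgC : ∀ z ∈ Metric.sphere 0 δ, ‖g z‖ ≤ C) (hhε : ∀ z ∈ Metric.sphere 0 δ, ‖h z‖ ≤ ε)
    (n : ℕ) (x : ℂ) :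
    ‖shefferSeq g h n x‖ ≤ n.factorial / δ ^ n * (C * Real.exp (ε * ‖x‖)) := by
  have hdiff : DifferentiableOn ℂ (fun z => Complex.exp (x * h z) * g z)
      (Metric.closedBall 0 δ) := (hh.const_mul x).cexp.mul hg
  rw [div_mul_eq_mul_div]
  refine Complex.norm_iteratedDeriv_le_of_forall_mem_sphere_norm_le n hδ
    (hdiff.diffContOnCl_ball subset_rfl) fun z hz => ?_
  have hexp : ‖Complex.exp (x * h z)‖ ≤ Real.exp (ε * ‖x‖) := by
    refine (Complex.norm_exp_le_exp_norm _).trans (Real.exp_le_exp.2 ?_)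
    rw [norm_mul, mul_comm]
    exact mul_le_mul_of_nonneg_right (hhε z hz) (norm_nonneg x)
  rw [norm_mul, mul_comm]
  exact mul_le_mul (hgC z hz) hexp (norm_nonneg _) ((norm_nonneg _).trans (hgC z hz))

theorem exists_norm_shefferSeq_le (hg : AnalyticAt ℂ g 0) (hh : AnalyticAt ℂ h 0) (hh₀ : h 0 = 0)
    {ε : ℝ} (hε : 0 < ε) :
    ∃ δ > 0, ∃ C > 0, ∀ n x,
      ‖shefferSeq g h n x‖ ≤ n.factorial / δ ^ n * (C * Real.exp (ε * ‖x‖)) := by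
  have hgC : ∀ᶠ z in 𝓝 0, ‖g z‖ < ‖g 0‖ + 1 :=
    hg.continuousAt.norm.eventually_lt_const (lt_add_one _)
  have hhε : ∀ᶠ z in 𝓝 0, ‖h z‖ < ε :=
    hh.continuousAt.norm.eventually_lt_const (by simpa [hh₀] using hε)
  obtain ⟨δ, hδ, hball⟩ := Metric.nhds_basis_closedBall.eventually_iff.1
    (hg.eventually_analyticAt.and (hh.eventually_analyticAt.and (hgC.and hhε)))
  exact ⟨δ, hδ, ‖g 0‖ + 1, by positivity, norm_shefferSeq_le hδ
    (fun z hz => (hball hz).1.differentiableAt.differentiableWithinAt)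
    (fun z hz => (hball hz).2.1.differentiableAt.differentiableWithinAt)
    (fun z hz => (hball (Metric.sphere_subset_closedBall hz)).2.2.1.le)
    (fun z hz => (hball (Metric.sphere_subset_closedBall hz)).2.2.2.le)⟩

end Sheffer

theorem mittagLeffler_zero (β : ℝ) : mittagLeffler β 0 = 1 := by
  rw [mittagLeffler, tsum_eq_single 0 fun n hn => by simp [hn]]
  simp

theorem analyticAt_mittagLeffler_zero {β : ℝ} (hβ : 0 ≤ β) :
    AnalyticAt ℂ (mittagLeffler β) 0 := by
  obtain ⟨x₀, ⟨hx₀, -⟩, hmin⟩ := Real.exists_isMinOn_Gamma_Ioi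
  have hΓ : 0 < Real.Gamma x₀ := Real.Gamma_pos_of_pos (one_pos.trans hx₀)
  have hcoeff (n : ℕ) : ‖(Complex.Gamma ((β * n + 1 : ℝ) : ℂ))⁻¹‖ ≤ (Real.Gamma x₀)⁻¹ := by
    have hle : Real.Gamma x₀ ≤ Real.Gamma (β * n + 1) :=
      hmin (show 0 < β * n + 1 by positivity)
    rw [norm_inv, Complex.Gamma_ofReal, Complex.norm_of_nonneg (hΓ.le.trans hle)]
    exact inv_anti₀ hΓ hle
  simpa only [← div_eq_inv_mul] using! analyticAt_tsum_mul_pow hcoeff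

theorem analyticAt_inv_mittagLeffler_const_mul (lam : ℝ) {β : ℝ} (hβ : 0 ≤ β) :
    AnalyticAt ℂ (fun z : ℂ => (mittagLeffler β (lam * z))⁻¹) 0 := by
  refine AnalyticAt.fun_inv ?_ (by simp [mittagLeffler_zero])
  exact (analyticAt_mittagLeffler_zero hβ).fun_comp_of_eq
    (analyticAt_const.mul analyticAt_id) (mul_zero _)

theorem analyticAt_log_one_add : AnalyticAt ℂ (fun z : ℂ => Complex.log (1 + z)) 0 :=
  (analyticAt_const.add analyticAt_id).clog (by simp)

theorem genAppell_eq_shefferSeq (lam β : ℝ) (n : ℕ) :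
    genAppell lam β n =
      shefferSeq (fun z => (mittagLeffler β (lam * z))⁻¹) (fun z => Complex.log (1 + z)) n :=
  rfl

theorem differentiable_genAppell (lam : ℝ) {β : ℝ} (hβ : 0 ≤ β) (n : ℕ) :
    Differentiable ℂ (genAppell lam β n) := by
  rw [genAppell_eq_shefferSeq]
  exact differentiable_shefferSeq (analyticAt_inv_mittagLeffler_const_mul lam hβ)
    analyticAt_log_one_add n

theorem exists_norm_genAppell_le (lam : ℝ) {β ε : ℝ} (hβ : 0 ≤ β) (hε : 0 < ε) :
    ∃ δ > 0, ∃ C > 0, ∀ n x,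
      ‖genAppell lam β n x‖ ≤ n.factorial / δ ^ n * (C * Real.exp (ε * ‖x‖)) := by
  simp only [genAppell_eq_shefferSeq]
  exact exists_norm_shefferSeq_le (analyticAt_inv_mittagLeffler_const_mul lam hβ)
    analyticAt_log_one_add (by simp) hε

theorem stmt12_general (lam : ℝ) {β ε : ℝ} (hβ : 0 ≤ β) (hε : 0 < ε) :
    ∃ (q : ℕ) (K' : ℝ), 0 < K' ∧ ∀ φ : ℕ → ℂ,
      Summable (fun n : ℕ => (n.factorial : ℝ) ^ 2 * 2 ^ (n * q) * ‖φ n‖ ^ 2) →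
      (∀ z : ℂ, Summable fun n : ℕ => φ n * genAppell lam β n z) ∧
      Differentiable ℂ (fun z : ℂ => ∑' n : ℕ, φ n * genAppell lam β n z) ∧
      ∀ z : ℂ, ‖∑' n : ℕ, φ n * genAppell lam β n z‖ ≤
        K' * Real.sqrt (∑' n : ℕ, (n.factorial : ℝ) ^ 2 * 2 ^ (n * q) * ‖φ n‖ ^ 2) *
          Real.exp (ε * ‖z‖) := by
  obtain ⟨δ, hδ, C, hC, hbound⟩ := exists_norm_genAppell_le lam hβ hε
  obtain ⟨q, hq⟩ := pow_unbounded_of_one_lt (1 / δ ^ 2) (one_lt_two (α := ℝ))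
  have hqδ : 1 < 2 ^ q * δ ^ 2 := (div_lt_iff₀ (by positivity)).1 hq
  have hK : 0 < (1 - (2 ^ q * δ ^ 2)⁻¹)⁻¹ := inv_pos.2 (sub_pos.2 (inv_lt_one_of_one_lt₀ hqδ))
  refine ⟨q, C * √(1 - (2 ^ q * δ ^ 2)⁻¹)⁻¹, by positivity, fun φ hφ => ?_⟩
  have hweight (n : ℕ) : (n.factorial : ℝ) ^ 2 * 2 ^ (n * q) * ‖φ n‖ ^ 2 =
      (2 ^ q) ^ n * (n.factorial * ‖φ n‖) ^ 2 := by rw [pow_mul']; ring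
  simp only [hweight] at hφ ⊢
  obtain ⟨hsum, hle⟩ := summable_div_pow_and_tsum_div_pow_le (by positivity) hδ hqδ
    (fun n => by positivity) hφ
  have hterm (n : ℕ) (z : ℂ) : ‖φ n * genAppell lam β n z‖ ≤
      n.factorial * ‖φ n‖ / δ ^ n * (C * Real.exp (ε * ‖z‖)) := by
    rw [norm_mul]
    exact (mul_le_mul_of_nonneg_left (hbound n z) (norm_nonneg _)).trans_eq (by ring)
  refine ⟨fun z => .of_norm_bounded (hsum.mul_right _) fun n => hterm n z,
    differentiable_tsum_of_norm_le_mul hsum (by fun_prop)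
      (fun n => (differentiable_genAppell lam hβ n).const_mul _) hterm, fun z => ?_⟩
  calc ‖∑' n, φ n * genAppell lam β n z‖
      ≤ (∑' n, n.factorial * ‖φ n‖ / δ ^ n) * (C * Real.exp (ε * ‖z‖)) :=
        tsum_of_norm_bounded (hsum.hasSum.mul_right _) fun n => hterm n z
    _ ≤ _ := mul_le_mul_of_nonneg_right hle (by positivity)
    _ = _ := by ring

theorem stmt12 (lam β : ℝ) (hlam : 0 < lam) (hβ0 : 0 < β) (hβ1 : β ≤ 1)
    (ε : ℝ) (hε : 0 < ε) :
    ∃ (q : ℕ) (K' : ℝ), 0 < K' ∧ ∀ φ : ℕ → ℂ,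
      Summable (fun n : ℕ => (n.factorial : ℝ) ^ 2 * 2 ^ (n * q) * ‖φ n‖ ^ 2) →
      (∀ z : ℂ, Summable fun n : ℕ => φ n * genAppell lam β n z) ∧
      Differentiable ℂ (fun z : ℂ => ∑' n : ℕ, φ n * genAppell lam β n z) ∧
      ∀ z : ℂ, ‖∑' n : ℕ, φ n * genAppell lam β n z‖ ≤
        K' * Real.sqrt (∑' n : ℕ, (n.factorial : ℝ) ^ 2 * 2 ^ (n * q) * ‖φ n‖ ^ 2) *
          Real.exp (ε * ‖z‖) := by
  exact stmt12_general lam hβ0.le hε
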